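/- arXiv:1406.4852 — 2 statements merged into one kernel-verified Lean document; each statement's English description precedes it below -/
import Mathlib

section
/- (Second outer bound.) Let (M, (W_j), (S_i^j)) be an exact-repair regenerating code with parameters (n,k,d) and secondary parameters (B,α,β), where n ≥ d+1, and let 0 ≤ q ≤ k. Let Δ = {(i,j) : q+1 ≤ j ≤ k and j < i ≤ d+1} be the helper index region of the minimal configuration with intact nodes {1,…,q} and repaired nodes {q+1,…,k}. Let (M_1,L_1), …, (M_s,L_s) be pairs of subsets with L_t ⊆ {q+1,…,k} and M_t ⊆ {1,…,d+1}, such that the rectangles M_t × L_t are pairwise disjoint, contained in Δ, and their union equals Δ. For each t put ℓ_t = |L_t| ≥ 1 and m_t = |M_t| ≥ 1, and let r_t be an integer with ℓ_t ≤ r_t and r_t + m_t ≤ k. Then (1 + Σ_{t=1}^s ℓ_t)·B ≤ B_q + Σ_{t=1}^s ( B_{r_t+m_t−1} + (ℓ_t − 1)(B_{r_t+m_t−2} − β) ). -/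
open Finset

/-- Shannon entropy (base 2) of a finitely-valued random variable `X` on a finite
probability space with mass function `P`. -/
noncomputable def entH {Ω S : Type*} [Fintype Ω] (P : Ω → ℝ) (X : Ω → S) : ℝ :=
  letI := Classical.decEq S
  ∑ s ∈ Finset.univ.image X,
    -((∑ ω ∈ Finset.univ.filter (fun ω => X ω = s), P ω) *
       Real.logb 2 (∑ ω ∈ Finset.univ.filter (fun ω => X ω = s), P ω))

/-- Conditional entropy `H(X | Y) = H(X, Y) - H(Y)`. -/
noncomputable def condH {Ω S T : Type*} [Fintype Ω] (P : Ω → ℝ) (X : Ω → S) (Y : Ω → T) : ℝ :=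
  entH P (fun ω => (X ω, Y ω)) - entH P Y

/-- The joint random variable `W_J = (W_j : j ∈ J)`. -/
def jointW {Ω : Type*} {n : ℕ} {σW : Fin n → Type*} (W : ∀ j, Ω → σW j)
    (J : Finset (Fin n)) : Ω → ∀ j : J, σW j.1 :=
  fun ω j => W j.1 ω

/-- The joint random variable `(S_i^j : (i,j) ∈ E)` for a set `E` of pairs. -/
def jointS {Ω : Type*} {n : ℕ} {σS : Fin n → Fin n → Type*} (S : ∀ i j, Ω → σS i j)
    (E : Finset (Fin n × Fin n)) : Ω → ∀ e : E, σS e.1.1 e.1.2 :=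
  fun ω e => S e.1.1 e.1.2 ω

/-- The joint random variable `S_I^j = (S_i^j : i ∈ I)`. -/
def jointSto {Ω : Type*} {n : ℕ} {σS : Fin n → Fin n → Type*} (S : ∀ i j, Ω → σS i j)
    (I : Finset (Fin n)) (j : Fin n) : Ω → ∀ i : I, σS i.1 j :=
  fun ω i => S i.1 j ω

/-- An exact-repair regenerating code with parameters `(n,k,d)` (with `1 ≤ k ≤ d ≤ n-1`)
and secondary parameters `(B,α,β)`: the file `M`, the stored data `W j` on server `j`
(servers indexed by `Fin n`, server `j` of the paper being index `j-1`), and the helper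
information `S i j` sent from server `i` to repair server `j`. -/
structure IsRegenCode {Ω : Type*} [Fintype Ω] (n k d : ℕ) (B α β : ℝ) (P : Ω → ℝ)
    {σM : Type*} {σW : Fin n → Type*} {σS : Fin n → Fin n → Type*}
    (M : Ω → σM) (W : ∀ j, Ω → σW j) (S : ∀ i j, Ω → σS i j) : Prop where
  prob_nonneg : ∀ ω, 0 ≤ P ω
  prob_sum : ∑ ω, P ω = 1
  hk : 1 ≤ k
  hkd : k ≤ d
  hdn : d + 1 ≤ n
  hB : 0 ≤ B
  hα : 0 ≤ α
  hβ : 0 ≤ β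
  hMB : entH P M = B
  hWα : ∀ j, entH P (W j) = α
  hWM : ∀ j, condH P (W j) M = 0
  hMW : ∀ J : Finset (Fin n), k ≤ J.card → condH P M (jointW W J) = 0
  hSβ : ∀ i j, i ≠ j → entH P (S i j) = β
  hSW : ∀ i j, i ≠ j → condH P (S i j) (W i) = 0
  hWS : ∀ (j : Fin n) (I : Finset (Fin n)), d ≤ I.card → j ∉ I →
    condH P (W j) (jointSto S I j) = 0

/-- `B_q = qα + ((k-q)(k-q-1)/2)β + (d+1-k)(k-q)β`. -/
noncomputable def Bfun (k d q : ℕ) (α β : ℝ) : ℝ :=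
  (q : ℝ) * α + (((k - q) * (k - q - 1) : ℕ) : ℝ) / 2 * β
    + (((d + 1 - k) * (k - q) : ℕ) : ℝ) * β

/-- The mass of the class of `ω` under the partition `r`. -/
noncomputable def classMass {Ω : Type*} [Fintype Ω] (P : Ω → ℝ) (r : Setoid Ω) (ω : Ω) : ℝ :=
  letI := Classical.decPred (r ω)
  ∑ ω' ∈ Finset.univ.filter (fun ω' => r ω ω'), P ω'

/-- The Shannon entropy of a partition of the sample space. -/
noncomputable def partitionEntropy {Ω : Type*} [Fintype Ω] (P : Ω → ℝ) (r : Setoid Ω) : ℝ :=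
  ∑ ω, P ω * -Real.logb 2 (classMass P r ω)

/-- On the support of `P`, the partition `r` is finer than `t`. -/
def Determines {Ω : Type*} (P : Ω → ℝ) (r t : Setoid Ω) : Prop :=
  ∀ x y, 0 < P x → 0 < P y → r x y → t x y

theorem entH_eq_partitionEntropy {Ω S : Type*} [Fintype Ω] (P : Ω → ℝ) (X : Ω → S) :
    entH P X = partitionEntropy P (Setoid.ker X) := by
  classical
  unfold entH partitionEntropy
  rw [← Finset.sum_fiberwise_of_maps_to (t := Finset.univ.image X) (g := X)
    (fun ω _ => Finset.mem_image_of_mem X (Finset.mem_univ ω))]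
  refine Finset.sum_congr (by congr!) fun s _ => ?_
  rw [← mul_neg, Finset.sum_mul]
  refine Finset.sum_congr (by congr!) fun ω hω => ?_
  have h : X ω = s := by simpa using hω
  subst h
  unfold classMass
  congr! 5
  simp [Setoid.ker_def, eq_comm]

section Partition

variable {Ω : Type*} [Fintype Ω] {P : Ω → ℝ}

theorem classMass_mono (hP : ∀ ω, 0 ≤ P ω) {r t : Setoid Ω} (h : Determines P r t) {ω : Ω}
    (hω : 0 < P ω) : classMass P r ω ≤ classMass P t ω := by
  classical
  unfold classMass
  rw [Finset.sum_filter, Finset.sum_filter]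
  refine Finset.sum_le_sum fun y _ => ?_
  rcases (hP y).eq_or_lt with h0 | hy
  · simp [← h0]
  · have := h ω y hω hy
    split_ifs <;> simp_all

theorem classMass_pos (hP : ∀ ω, 0 ≤ P ω) (r : Setoid Ω) {ω : Ω} (hω : 0 < P ω) :
    0 < classMass P r ω := by
  classical
  refine hω.trans_le ?_
  unfold classMass
  exact Finset.single_le_sum (f := P) (fun y _ => hP y) (by simp)

theorem classMass_congr {r : Setoid Ω} {x y : Ω} (h : r x y) :
    classMass P r x = classMass P r y := by
  classical
  unfold classMass
  refine Finset.sum_congr ?_ fun _ _ => rfl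
  ext z
  simpa using ⟨fun hz => r.trans' (r.symm' h) hz, fun hz => r.trans' h hz⟩

theorem partitionEntropy_mono (hP : ∀ ω, 0 ≤ P ω) {r t : Setoid Ω} (h : Determines P r t) :
    partitionEntropy P t ≤ partitionEntropy P r := by
  refine Finset.sum_le_sum fun ω _ => ?_
  rcases (hP ω).eq_or_lt with h0 | hω
  · simp [← h0]
  · exact mul_le_mul_of_nonneg_left (neg_le_neg (Real.logb_le_logb_of_le (by norm_num)
      (classMass_pos hP r hω) (classMass_mono hP h hω))) hω.le

theorem partitionEntropy_top (hP1 : ∑ ω, P ω = 1) : partitionEntropy P ⊤ = 0 := by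
  unfold partitionEntropy classMass
  simp [Setoid.top_def, hP1]

theorem determines_of_condH_eq_zero {S T : Type*} (hP : ∀ ω, 0 ≤ P ω) {X : Ω → S} {Y : Ω → T}
    (h : condH P X Y = 0) : Determines P (Setoid.ker Y) (Setoid.ker X) := by
  classical
  have hfine : Determines P (Setoid.ker fun ω => (X ω, Y ω)) (Setoid.ker Y) := by
    intro x y _ _ hxy
    simp only [Setoid.ker_def, Prod.mk.injEq] at hxy ⊢
    exact hxy.2
  rw [condH, entH_eq_partitionEntropy, entH_eq_partitionEntropy, partitionEntropy,
    partitionEntropy, ← Finset.sum_sub_distrib] at h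
  have hterm : ∀ ω ∈ Finset.univ, 0 ≤ P ω * -Real.logb 2
      (classMass P (Setoid.ker fun ω => (X ω, Y ω)) ω) -
        P ω * -Real.logb 2 (classMass P (Setoid.ker Y) ω) := by
    intro ω _
    rcases (hP ω).eq_or_lt with h0 | hω
    · simp [← h0]
    · exact sub_nonneg.2 <| mul_le_mul_of_nonneg_left (neg_le_neg
        (Real.logb_le_logb_of_le (by norm_num) (classMass_pos hP _ hω)
          (classMass_mono hP hfine hω))) hω.le
  rw [Finset.sum_eq_zero_iff_of_nonneg hterm] at h
  intro x y hx hy hxy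
  have hx0 := h x (Finset.mem_univ x)
  rw [← mul_sub, mul_eq_zero, or_iff_right hx.ne', sub_eq_zero, neg_inj] at hx0
  have hmass := Real.logb_injOn_pos (by norm_num : (1 : ℝ) < 2)
    (classMass_pos hP _ hx) (classMass_pos hP _ hx) hx0
  by_contra hne
  unfold classMass at hmass
  refine hmass.not_lt (Finset.sum_lt_sum_of_subset (i := y) ?_ ?_ ?_ hy fun z _ _ => hP z)
  · intro z hz
    simp only [Finset.mem_filter, Finset.mem_univ, true_and, Setoid.ker_def, Prod.mk.injEq]
      at hz ⊢
    exact hz.2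
  · simpa using hxy
  · simp only [Setoid.ker_def] at hne
    simp [Setoid.ker_def, hne]

theorem sum_classMass_mul_div_le_one (hP : ∀ ω, 0 ≤ P ω) (hP1 : ∑ ω, P ω = 1)
    {a b c : Setoid Ω} (ha : Determines P a c) (hb : Determines P b c) :
    ∑ ω, P ω * (classMass P a ω * classMass P b ω /
      (classMass P (a ⊓ b) ω * classMass P c ω)) ≤ 1 := by
  classical
  have hinner : ∀ u v, 0 < P u → 0 < P v →
      (∑ ω, if a ω u ∧ b ω v then P ω / (classMass P (a ⊓ b) ω * classMass P c ω) else 0)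
        ≤ if c u v then 1 / classMass P c u else 0 := by
    intro u v hu hv
    by_cases hex : ∃ w, 0 < P w ∧ a w u ∧ b w v
    · obtain ⟨w, hw, hwu, hwv⟩ := hex
      have hcu : c w u := ha w u hw hu hwu
      have hcv : c w v := hb w v hw hv hwv
      rw [if_pos (c.trans' (c.symm' hcu) hcv), ← classMass_congr (P := P) hcu]
      have hpos := classMass_pos hP (a ⊓ b) hw
      have hcpos := classMass_pos hP c hw
      refine le_of_eq ?_
      calc _ = ∑ ω, if (a ⊓ b) w ω then
            P ω / (classMass P (a ⊓ b) w * classMass P c w) else 0 := by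
            refine Finset.sum_congr rfl fun ω _ => ?_
            have hiff : (a ω u ∧ b ω v) ↔ (a ⊓ b) w ω := by
              constructor
              · rintro ⟨h1, h2⟩
                exact ⟨a.trans' hwu (a.symm' h1), b.trans' hwv (b.symm' h2)⟩
              · rintro ⟨h1, h2⟩
                exact ⟨a.trans' (a.symm' h1) hwu, b.trans' (b.symm' h2) hwv⟩
            rw [if_congr hiff rfl rfl]
            split_ifs with hωw
            · rcases (hP ω).eq_or_lt with h0 | hω
              · simp [← h0]
              · rw [classMass_congr (P := P) hωw,
                  classMass_congr (P := P) (ha w ω hw hω hωw.1)]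
            · rfl
        _ = classMass P (a ⊓ b) w / (classMass P (a ⊓ b) w * classMass P c w) := by
            rw [← Finset.sum_filter, ← Finset.sum_div]
            unfold classMass
            congr!
        _ = 1 / classMass P c w := by field_simp
    · push Not at hex
      refine (Finset.sum_nonpos fun ω _ => ?_).trans ?_
      · split_ifs with hω
        · rcases (hP ω).eq_or_lt with h0 | hωpos
          · simp [← h0]
          · exact absurd hω.2 (hex ω hωpos hω.1)
        · exact le_rfl
      · split_ifs
        · exact (one_div_pos.2 (classMass_pos hP c hu)).le
        · exact le_rfl
  have hmass : ∀ (r : Setoid Ω) (ω : Ω), classMass P r ω = ∑ u, if r ω u then P u else 0 := by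
    intro r ω
    rw [← Finset.sum_filter]
    unfold classMass
    congr!
  calc ∑ ω, P ω * (classMass P a ω * classMass P b ω /
        (classMass P (a ⊓ b) ω * classMass P c ω))
      = ∑ ω, ∑ u, ∑ v, P u * P v * (if a ω u ∧ b ω v then
          P ω / (classMass P (a ⊓ b) ω * classMass P c ω) else 0) := by
        refine Finset.sum_congr rfl fun ω _ => ?_
        rw [mul_div_assoc', mul_comm, mul_div_assoc, hmass a, hmass b, Finset.sum_mul_sum,
          Finset.sum_mul]
        refine Finset.sum_congr rfl fun u _ => ?_
        rw [Finset.sum_mul]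
        refine Finset.sum_congr rfl fun v _ => ?_
        by_cases h1 : a ω u <;> by_cases h2 : b ω v <;> simp [h1, h2]
    _ = ∑ u, ∑ v, P u * P v * ∑ ω, (if a ω u ∧ b ω v then
          P ω / (classMass P (a ⊓ b) ω * classMass P c ω) else 0) := by
        rw [Finset.sum_comm]
        refine Finset.sum_congr rfl fun u _ => ?_
        rw [Finset.sum_comm]
        refine Finset.sum_congr rfl fun v _ => ?_
        rw [Finset.mul_sum]
    _ ≤ ∑ u, ∑ v, P u * P v * (if c u v then 1 / classMass P c u else 0) := by
        refine Finset.sum_le_sum fun u _ => Finset.sum_le_sum fun v _ => ?_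
        rcases (hP u).eq_or_lt with h0 | hu
        · simp [← h0]
        rcases (hP v).eq_or_lt with h0 | hv
        · simp [← h0]
        exact mul_le_mul_of_nonneg_left (hinner u v hu hv) (mul_pos hu hv).le
    _ = ∑ u, P u := by
        refine Finset.sum_congr rfl fun u _ => ?_
        rcases (hP u).eq_or_lt with h0 | hu
        · simp [← h0]
        have hpos := classMass_pos hP c hu
        calc _ = P u * (∑ v, if c u v then P v else 0) * (1 / classMass P c u) := by
              rw [Finset.mul_sum, Finset.sum_mul]
              refine Finset.sum_congr rfl fun v _ => ?_
              split_ifs <;> simp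
          _ = P u := by
              rw [← hmass]
              field_simp
    _ = 1 := hP1

theorem partitionEntropy_submodular (hP : ∀ ω, 0 ≤ P ω) (hP1 : ∑ ω, P ω = 1)
    {a b c : Setoid Ω} (ha : Determines P a c) (hb : Determines P b c) :
    partitionEntropy P (a ⊓ b) + partitionEntropy P c
      ≤ partitionEntropy P a + partitionEntropy P b := by
  have hlog2 : 0 < Real.log 2 := Real.log_pos (by norm_num)
  have hterm : ∀ ω ∈ Finset.univ, P ω * (1 - classMass P a ω * classMass P b ω /
      (classMass P (a ⊓ b) ω * classMass P c ω)) / Real.log 2 ≤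
      P ω * -Real.logb 2 (classMass P a ω) + P ω * -Real.logb 2 (classMass P b ω) -
        (P ω * -Real.logb 2 (classMass P (a ⊓ b) ω) +
          P ω * -Real.logb 2 (classMass P c ω)) := by
    intro ω _
    rcases (hP ω).eq_or_lt with h0 | hω
    · simp [← h0]
    have h1 := classMass_pos hP a hω
    have h2 := classMass_pos hP b hω
    have h3 := classMass_pos hP (a ⊓ b) hω
    have h4 := classMass_pos hP c hω
    have h5 := Real.log_le_sub_one_of_pos (div_pos (mul_pos h1 h2) (mul_pos h3 h4))
    rw [Real.log_div (mul_pos h1 h2).ne' (mul_pos h3 h4).ne', Real.log_mul h1.ne' h2.ne',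
      Real.log_mul h3.ne' h4.ne'] at h5
    simp only [Real.logb]
    rw [div_le_iff₀ hlog2]
    field_simp at h5 ⊢
    linarith
  have hsum := Finset.sum_le_sum hterm
  rw [← Finset.sum_div] at hsum
  have hone := sum_classMass_mul_div_le_one hP hP1 ha hb
  have hnonneg : 0 ≤ (∑ ω, P ω * (1 - classMass P a ω * classMass P b ω /
      (classMass P (a ⊓ b) ω * classMass P c ω))) / Real.log 2 := by
    refine div_nonneg ?_ hlog2.le
    simp only [mul_sub, mul_one, Finset.sum_sub_distrib, hP1]
    linarith
  have := hnonneg.trans hsum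
  simp only [Finset.sum_sub_distrib, Finset.sum_add_distrib] at this
  unfold partitionEntropy
  linarith

theorem partitionEntropy_inf_le (hP : ∀ ω, 0 ≤ P ω) (hP1 : ∑ ω, P ω = 1) (a b : Setoid Ω) :
    partitionEntropy P (a ⊓ b) ≤ partitionEntropy P a + partitionEntropy P b := by
  have htop : ∀ r : Setoid Ω, Determines P r ⊤ := fun _ _ _ _ _ _ => trivial
  have := partitionEntropy_submodular hP hP1 (htop a) (htop b)
  rwa [partitionEntropy_top hP1, add_zero] at this

theorem partitionEntropy_finset_inf_le (hP : ∀ ω, 0 ≤ P ω) (hP1 : ∑ ω, P ω = 1) {ι : Type*}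
    (J : Finset ι) (f : ι → Setoid Ω) :
    partitionEntropy P (J.inf f) ≤ ∑ j ∈ J, partitionEntropy P (f j) := by
  classical
  induction J using Finset.induction_on with
  | empty => simp [partitionEntropy_top hP1]
  | insert j J hj ih =>
    rw [Finset.inf_insert, Finset.sum_insert hj]
    exact (partitionEntropy_inf_le hP hP1 _ _).trans (by linarith)

theorem partitionEntropy_finset_inf_add_le (hP : ∀ ω, 0 ≤ P ω) (hP1 : ∑ ω, P ω = 1)
    {ι : Type*} (J : Finset ι) (f : ι → Setoid Ω) (c : Setoid Ω) :
    partitionEntropy P (c ⊓ J.inf f) + (J.card : ℝ) * partitionEntropy P c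
      ≤ partitionEntropy P c + ∑ j ∈ J, partitionEntropy P (c ⊓ f j) := by
  classical
  induction J using Finset.induction_on with
  | empty => simp
  | insert j J hj ih =>
    rw [Finset.inf_insert, Finset.sum_insert hj, Finset.card_insert_of_notMem hj]
    have hsub := partitionEntropy_submodular hP hP1 (a := c ⊓ f j) (b := c ⊓ J.inf f) (c := c)
      (fun _ _ _ _ h => h.1) (fun _ _ _ _ h => h.1)
    rw [inf_inf_inf_comm, inf_idem] at hsub
    push_cast
    linarith

end Partition

theorem finset_inf_setoid_iff {Ω ι : Type*} {J : Finset ι} {f : ι → Setoid Ω} {x y : Ω} :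
    (J.inf f) x y ↔ ∀ j ∈ J, f j x y := by
  classical
  induction J using Finset.induction_on with
  | empty => exact ⟨fun _ j hj => absurd hj (Finset.notMem_empty j), fun _ => trivial⟩
  | insert j J hj ih =>
    rw [Finset.inf_insert, Finset.forall_mem_insert, ← ih]
    rfl

theorem Bfun_succ {k d p : ℕ} (hp : p < k) (hkd : k ≤ d) (α β : ℝ) :
    Bfun k d (p + 1) α β = Bfun k d p α β + α - ((d : ℝ) - p) * β := by
  obtain ⟨e, rfl⟩ := Nat.exists_eq_add_of_lt hp
  obtain ⟨g, rfl⟩ := Nat.exists_eq_add_of_le hkd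
  unfold Bfun
  have h1 : p + e + 1 - p = e + 1 := by omega
  have h2 : p + e + 1 - (p + 1) = e := by omega
  have h3 : p + e + 1 + g + 1 - (p + e + 1) = g + 1 := by omega
  rw [h1, h2, h3]
  rcases e with _ | e <;> simp only [Nat.add_sub_cancel, zero_mul] <;> push_cast <;> ring

theorem Bfun_self (k d : ℕ) (α β : ℝ) : Bfun k d k α β = k * α := by
  simp [Bfun]

namespace IsRegenCode

variable {Ω : Type*} [Fintype Ω] {n k d : ℕ} {B α β : ℝ} {P : Ω → ℝ}
  {σM : Type*} {σW : Fin n → Type*} {σS : Fin n → Fin n → Type*}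
  {M : Ω → σM} {W : ∀ j, Ω → σW j} {S : ∀ i j, Ω → σS i j}

theorem determines_file (hcode : IsRegenCode n k d B α β P M W S) {r : Setoid Ω}
    {J : Finset (Fin n)} (hJ : k ≤ J.card)
    (h : ∀ j ∈ J, Determines P r (Setoid.ker (W j))) :
    Determines P r (Setoid.ker M) := by
  intro x y hx hy hxy
  refine determines_of_condH_eq_zero hcode.prob_nonneg (hcode.hMW J hJ) x y hx hy ?_
  funext j
  exact h j.1 j.2 x y hx hy hxy

theorem le_partitionEntropy (hcode : IsRegenCode n k d B α β P M W S) {r : Setoid Ω}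
    {J : Finset (Fin n)} (hJ : k ≤ J.card)
    (h : ∀ j ∈ J, Determines P r (Setoid.ker (W j))) :
    B ≤ partitionEntropy P r := by
  rw [← hcode.hMB, entH_eq_partitionEntropy]
  exact partitionEntropy_mono hcode.prob_nonneg (hcode.determines_file hJ h)

theorem determines_repaired (hcode : IsRegenCode n k d B α β P M W S) {r : Setoid Ω}
    {j : Fin n} {I : Finset (Fin n)} (hI : d ≤ I.card) (hj : j ∉ I)
    (h : ∀ i ∈ I, Determines P r (Setoid.ker (S i j))) :
    Determines P r (Setoid.ker (W j)) := by
  intro x y hx hy hxy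
  refine determines_of_condH_eq_zero hcode.prob_nonneg (hcode.hWS j I hI hj) x y hx hy ?_
  funext i
  exact h i.1 i.2 x y hx hy hxy

theorem determines_helper (hcode : IsRegenCode n k d B α β P M W S) {r : Setoid Ω}
    {i j : Fin n} (hij : i ≠ j) (h : Determines P r (Setoid.ker (W i))) :
    Determines P r (Setoid.ker (S i j)) := fun x y hx hy hxy =>
  determines_of_condH_eq_zero hcode.prob_nonneg (hcode.hSW i j hij) x y hx hy
    (h x y hx hy hxy)

theorem entropy_node (hcode : IsRegenCode n k d B α β P M W S) (j : Fin n) :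
    partitionEntropy P (Setoid.ker (W j)) = α := by
  rw [← entH_eq_partitionEntropy, hcode.hWα]

theorem entropy_helper (hcode : IsRegenCode n k d B α β P M W S) {i j : Fin n} (hij : i ≠ j) :
    partitionEntropy P (Setoid.ker (S i j)) = β := by
  rw [← entH_eq_partitionEntropy, hcode.hSβ i j hij]

theorem entropy_nodes_le (hcode : IsRegenCode n k d B α β P M W S) (J : Finset (Fin n)) :
    partitionEntropy P (J.inf fun j => Setoid.ker (W j)) ≤ J.card * α := by
  refine (partitionEntropy_finset_inf_le hcode.prob_nonneg hcode.prob_sum J _).trans ?_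
  simp [hcode.entropy_node]

theorem entropy_helpers_le (hcode : IsRegenCode n k d B α β P M W S)
    (E : Finset (Fin n × Fin n)) (hE : ∀ e ∈ E, e.1 ≠ e.2) :
    partitionEntropy P (E.inf fun e => Setoid.ker (S e.1 e.2)) ≤ E.card * β := by
  refine (partitionEntropy_finset_inf_le hcode.prob_nonneg hcode.prob_sum E _).trans ?_
  rw [Finset.sum_congr rfl fun e he => hcode.entropy_helper (hE e he)]
  simp

/-- Repairing node `j` from the intact nodes `J` and helpers `I \ J` costs at most
`(d - |J|)β`, and yields all the helper information from `I` to `j`. -/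
theorem entropy_repair_le (hcode : IsRegenCode n k d B α β P M W S) {I J : Finset (Fin n)}
    {j : Fin n} (hJI : J ⊆ I) (hI : I.card = d) (hj : j ∉ I) {t : Setoid Ω}
    (ht : ∀ r : Setoid Ω, (∀ i ∈ J, Determines P r (Setoid.ker (W i))) →
      (∀ i ∈ I, Determines P r (Setoid.ker (S i j))) →
      Determines P r (Setoid.ker (W j)) → Determines P r t) :
    partitionEntropy P t ≤ partitionEntropy P (J.inf fun i => Setoid.ker (W i))
      + ((d : ℝ) - J.card) * β := by
  classical
  let r : Setoid Ω := (J.inf fun i => Setoid.ker (W i)) ⊓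
    (I \ J).inf fun i => Setoid.ker (S i j)
  have hW : ∀ i ∈ J, Determines P r (Setoid.ker (W i)) := fun i hi x y _ _ h =>
    finset_inf_setoid_iff.1 h.1 i hi
  have hS : ∀ i ∈ I, Determines P r (Setoid.ker (S i j)) := by
    intro i hi
    by_cases hiJ : i ∈ J
    · exact hcode.determines_helper (fun h => hj (h ▸ hi)) (hW i hiJ)
    · exact fun x y _ _ h => finset_inf_setoid_iff.1 h.2 i (Finset.mem_sdiff.2 ⟨hi, hiJ⟩)
  refine (partitionEntropy_mono hcode.prob_nonneg
    (ht r hW hS (hcode.determines_repaired hI.ge hj hS))).trans ?_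
  refine (partitionEntropy_inf_le hcode.prob_nonneg hcode.prob_sum _ _).trans ?_
  gcongr
  refine (partitionEntropy_finset_inf_le hcode.prob_nonneg hcode.prob_sum _ _).trans ?_
  rw [Finset.sum_congr rfl fun i hi => hcode.entropy_helper (j := j)
    (fun h => hj (h ▸ (Finset.mem_sdiff.1 hi).1)), Finset.sum_const, nsmul_eq_mul,
    Finset.cast_card_sdiff hJI, hI]

theorem file_le_nodes_add (hcode : IsRegenCode n k d B α β P M W S) (J : Finset (Fin n))
    (hJ : J.card ≤ k) :
    B ≤ partitionEntropy P (J.inf fun j => Setoid.ker (W j))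
      + (Bfun k d J.card α β - J.card * α) := by
  classical
  have hkd := hcode.hkd
  have hdn := hcode.hdn
  induction hm : k - J.card generalizing J with
  | zero =>
    have hcard : J.card = k := by omega
    rw [hcard, Bfun_self, sub_self, add_zero]
    exact hcode.le_partitionEntropy hcard.ge fun j hj x y _ _ h =>
      finset_inf_setoid_iff.1 h j hj
  | succ m ih =>
    obtain ⟨K, hJK, hK⟩ := Finset.exists_superset_card_eq (s := J) (n := d + 1)
      (by omega) (by simpa using hdn)
    obtain ⟨j, hjK, hjJ⟩ := Finset.exists_mem_notMem_of_card_lt_card (s := J) (t := K) (by omega)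
    have hcard := Finset.card_insert_of_notMem hjJ
    have h1 := ih (insert j J) (by omega) (by omega)
    have h2 := hcode.entropy_repair_le (I := K.erase j) (J := J) (j := j)
      (t := (insert j J).inf fun j => Setoid.ker (W j))
      (Finset.subset_erase.2 ⟨hJK, hjJ⟩) (by rw [Finset.card_erase_of_mem hjK, hK]; rfl)
      (Finset.notMem_erase j K) (by
        intro r hr _ hrj x y hx hy hxy
        refine finset_inf_setoid_iff.2 fun i hi => ?_
        rcases Finset.mem_insert.1 hi with rfl | hi
        · exact hrj x y hx hy hxy
        · exact hr i hi x y hx hy hxy)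
    rw [hcard, Bfun_succ (by omega) hkd] at h1
    push_cast at h1
    linarith

theorem helpers_from_one_node_add_le (hcode : IsRegenCode n k d B α β P M W S)
    {L : Finset (Fin n)} {i : Fin n} {r : ℕ} (hi : i ∉ L) (hL : 1 ≤ L.card)
    (hLr : L.card ≤ r) (hrk : r + 1 ≤ k) :
    partitionEntropy P (L.inf fun j => Setoid.ker (S i j)) + L.card * B
      ≤ β + Bfun k d r α β + ((L.card : ℝ) - 1) * Bfun k d (r - 1) α β := by
  classical
  have hkd := hcode.hkd
  have hdn := hcode.hdn
  have hP := hcode.prob_nonneg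
  have hP1 := hcode.prob_sum
  obtain ⟨R, hLR, hRi, hR⟩ := Finset.exists_subsuperset_card_eq (s := L)
    (t := Finset.univ.erase i) (n := r) (Finset.subset_erase.2 ⟨Finset.subset_univ L, hi⟩) hLr
    (by rw [Finset.card_erase_of_mem (Finset.mem_univ i), Finset.card_fin]; omega)
  have hiR : i ∉ R := fun h => Finset.notMem_erase i _ (hRi h)
  set wR : Setoid Ω := R.inf fun j => Setoid.ker (W j) with hwR
  have hX : ∀ j ∈ L, partitionEntropy P (wR ⊓ Setoid.ker (S i j))
      ≤ ((r : ℝ) - 1) * α + ((d : ℝ) - r + 1) * β := by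
    intro j hjL
    have hjR := hLR hjL
    have hij : i ≠ j := fun h => hi (h ▸ hjL)
    have hcard : (R.erase j).card = r - 1 := by rw [Finset.card_erase_of_mem hjR, hR]
    have hcast : ((r - 1 : ℕ) : ℝ) = (r : ℝ) - 1 := by
      rw [Nat.cast_sub (by omega), Nat.cast_one]
    obtain ⟨I, hRI, hIj, hI⟩ := Finset.exists_subsuperset_card_eq
      (s := insert i (R.erase j)) (t := Finset.univ.erase j) (n := d)
      (Finset.insert_subset (Finset.mem_erase.2 ⟨hij, Finset.mem_univ i⟩)
        (Finset.erase_subset_erase j (Finset.subset_univ R)))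
      ((Finset.card_insert_le _ _).trans (by omega))
      (by rw [Finset.card_erase_of_mem (Finset.mem_univ j), Finset.card_fin]; omega)
    have h1 := hcode.entropy_repair_le (I := I) (J := R.erase j) (j := j)
      (t := wR ⊓ Setoid.ker (S i j)) ((Finset.subset_insert _ _).trans hRI) hI
      (fun h => Finset.notMem_erase j _ (hIj h)) (by
        intro s hs hsS hsj x y hx hy hxy
        refine ⟨finset_inf_setoid_iff.2 fun l hl => ?_,
          hsS i (hRI (Finset.mem_insert_self _ _)) x y hx hy hxy⟩
        by_cases hlj : l = j
        · exact hlj ▸ hsj x y hx hy hxy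
        · exact hs l (Finset.mem_erase.2 ⟨hlj, hl⟩) x y hx hy hxy)
    have h2 := hcode.entropy_nodes_le (R.erase j)
    rw [hcard, hcast] at h1 h2
    linarith
  have hunion := partitionEntropy_finset_inf_add_le hP hP1 L (fun j => Setoid.ker (S i j)) wR
  have hsum := Finset.sum_le_sum hX
  rw [Finset.sum_const, nsmul_eq_mul] at hsum
  have hsub := partitionEntropy_submodular hP hP1
    (a := wR ⊓ L.inf fun j => Setoid.ker (S i j)) (b := Setoid.ker (W i))
    (c := L.inf fun j => Setoid.ker (S i j)) (fun x y _ _ h => h.2)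
    (fun x y hx hy h => finset_inf_setoid_iff.2 fun j hj =>
      hcode.determines_helper (r := Setoid.ker (W i)) (ne_of_mem_of_not_mem hj hi).symm
        (fun _ _ _ _ h => h) x y hx hy h)
  rw [hcode.entropy_node] at hsub
  have hcardi : (insert i R).card = r + 1 := by rw [Finset.card_insert_of_notMem hiR, hR]
  have hbig := hcode.file_le_nodes_add (insert i R) (by omega)
  have hmono : partitionEntropy P ((insert i R).inf fun j => Setoid.ker (W j)) ≤
      partitionEntropy P ((wR ⊓ L.inf fun j => Setoid.ker (S i j)) ⊓ Setoid.ker (W i)) :=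
    partitionEntropy_mono hP fun x y _ _ h => by
      rw [Finset.inf_insert]
      exact ⟨h.2, h.1.1⟩
  have hsmall := hcode.file_le_nodes_add R (by omega)
  rw [hcardi, Bfun_succ (by omega) hkd] at hbig
  rw [hR, ← hwR] at hsmall
  obtain ⟨p, rfl⟩ : ∃ p, r = p + 1 := ⟨r - 1, by omega⟩
  have hrec := Bfun_succ (show p < k by omega) hkd α β
  rw [Nat.add_sub_cancel]
  have hℓ : (0 : ℝ) ≤ (L.card : ℝ) - 1 := by
    rw [sub_nonneg]
    exact_mod_cast hL
  have hmul := mul_le_mul_of_nonneg_left hsmall hℓ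
  rw [hrec] at hbig hmul ⊢
  push_cast at *
  nlinarith

theorem helpers_rectangle_add_le (hcode : IsRegenCode n k d B α β P M W S)
    {Ms Ls : Finset (Fin n)} {r : ℕ} (hdisj : ∀ i ∈ Ms, i ∉ Ls) (hL : 1 ≤ Ls.card)
    (hM : 1 ≤ Ms.card) (hLr : Ls.card ≤ r) (hrk : r + Ms.card ≤ k) :
    partitionEntropy P ((Ms ×ˢ Ls).inf fun e => Setoid.ker (S e.1 e.2)) + Ls.card * B
      ≤ ((Ms ×ˢ Ls).card : ℝ) * β + (Bfun k d (r + Ms.card - 1) α β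
        + ((Ls.card - 1 : ℕ) : ℝ) * (Bfun k d (r + Ms.card - 2) α β - β)) := by
  classical
  have hP := hcode.prob_nonneg
  have hP1 := hcode.prob_sum
  obtain ⟨i, hi⟩ := Finset.card_pos.1 hM
  have hcard : ((Ms.erase i).card : ℝ) = (Ms.card : ℝ) - 1 := by
    rw [Finset.card_erase_of_mem hi, Nat.cast_sub hM, Nat.cast_one]
  have hone := hcode.helpers_from_one_node_add_le (r := r + Ms.card - 1) (hdisj i hi) hL
    (by omega) (by omega)
  have hrest := hcode.entropy_helpers_le (Ms.erase i ×ˢ Ls) fun e he h => by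
    rw [Finset.mem_product] at he
    exact hdisj e.1 (Finset.mem_of_mem_erase he.1) (h ▸ he.2)
  have hsplit : partitionEntropy P ((Ms ×ˢ Ls).inf fun e => Setoid.ker (S e.1 e.2)) ≤
      partitionEntropy P ((Ls.inf fun j => Setoid.ker (S i j)) ⊓
        (Ms.erase i ×ˢ Ls).inf fun e => Setoid.ker (S e.1 e.2)) := by
    refine partitionEntropy_mono hP fun x y _ _ h => finset_inf_setoid_iff.2 fun e he => ?_
    rw [Finset.mem_product] at he
    by_cases hei : e.1 = i
    · rw [hei]
      exact finset_inf_setoid_iff.1 h.1 e.2 he.2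
    · exact finset_inf_setoid_iff.1 h.2 e
        (Finset.mem_product.2 ⟨Finset.mem_erase.2 ⟨hei, he.1⟩, he.2⟩)
  have hinf := partitionEntropy_inf_le hP hP1 (Ls.inf fun j => Setoid.ker (S i j))
    ((Ms.erase i ×ˢ Ls).inf fun e => Setoid.ker (S e.1 e.2))
  rw [Finset.card_product, Nat.cast_mul, hcard] at hrest
  rw [Finset.card_product, Nat.cast_mul, Nat.cast_sub hL, Nat.cast_one]
  rw [show r + Ms.card - 1 - 1 = r + Ms.card - 2 by omega] at hone
  linarith

/-- The nodes `j < q` together with the helper information indexed by the minimal configuration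
recover every node `j < k`. -/
theorem determines_of_minimal_configuration (hcode : IsRegenCode n k d B α β P M W S) {q : ℕ}
    {r : Setoid Ω} (hW : ∀ j : Fin n, (j : ℕ) < q → Determines P r (Setoid.ker (W j)))
    (hS : ∀ i j : Fin n, q ≤ (j : ℕ) → (j : ℕ) < k → (j : ℕ) < (i : ℕ) → (i : ℕ) < d + 1 →
      Determines P r (Setoid.ker (S i j))) (j : Fin n) (hj : (j : ℕ) < k) :
    Determines P r (Setoid.ker (W j)) := by
  classical
  have hkd := hcode.hkd
  have hdn := hcode.hdn
  induction hm : (j : ℕ) using Nat.strong_induction_on generalizing j with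
  | _ m ih =>
    subst hm
    by_cases hjq : (j : ℕ) < q
    · exact hW j hjq
    have hcard : (Finset.univ.filter fun i : Fin n => (i : ℕ) < d + 1).card = d + 1 := by
      rw [Fin.card_filter_val_lt]
      omega
    refine hcode.determines_repaired (j := j)
      (I := (Finset.univ.filter fun i : Fin n => (i : ℕ) < d + 1).erase j)
      (by rw [Finset.card_erase_of_mem (by simp; omega), hcard]; rfl)
      (Finset.notMem_erase j _) fun i hi => ?_
    simp only [Finset.mem_erase, Finset.mem_filter, Finset.mem_univ, true_and] at hi
    rcases lt_trichotomy (i : ℕ) j with hlt | heq | hgt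
    · exact hcode.determines_helper hi.1 (ih i hlt i (by omega) rfl)
    · exact absurd (Fin.ext heq) hi.1
    · exact hS i j (by omega) hj hgt hi.2

end IsRegenCode

theorem nodes_add_minimal_configuration_eq_Bfun {n k d q : ℕ} (hq : q ≤ k) (hkd : k ≤ d) (hdn : d + 1 ≤ n)
    (α β : ℝ) :
    q * α + ((Finset.univ.filter (fun e : Fin n × Fin n =>
      q ≤ (e.2 : ℕ) ∧ (e.2 : ℕ) < k ∧ (e.2 : ℕ) < (e.1 : ℕ) ∧ (e.1 : ℕ) < d + 1)).card : ℝ) * β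
      = Bfun k d q α β := by
  classical
  induction hm : k - q generalizing q with
  | zero =>
    obtain rfl : q = k := by omega
    rw [Bfun_self, Finset.filter_eq_empty_iff.2 (fun e _ => by omega)]
    simp
  | succ m ih =>
    have hrec := Bfun_succ (show q < k by omega) hkd α β
    rw [← ih (q := q + 1) (by omega) (by omega)] at hrec
    have hset : (Finset.univ.filter (fun e : Fin n × Fin n =>
        q ≤ (e.2 : ℕ) ∧ (e.2 : ℕ) < k ∧ (e.2 : ℕ) < (e.1 : ℕ) ∧ (e.1 : ℕ) < d + 1)) =
        (Finset.univ.filter (fun e : Fin n × Fin n => q + 1 ≤ (e.2 : ℕ) ∧ (e.2 : ℕ) < k ∧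
          (e.2 : ℕ) < (e.1 : ℕ) ∧ (e.1 : ℕ) < d + 1)) ∪
        (Finset.univ.filter fun i : Fin n => q < (i : ℕ) ∧ (i : ℕ) < d + 1) ×ˢ
          {(⟨q, by omega⟩ : Fin n)} := by
      ext e
      simp only [Finset.mem_filter, Finset.mem_univ, true_and, Finset.mem_union,
        Finset.mem_product, Finset.mem_singleton, Fin.ext_iff]
      omega
    have hcol : (Finset.univ.filter fun i : Fin n => q < (i : ℕ) ∧ (i : ℕ) < d + 1).card
        = d - q := by
      rw [← Finset.card_map Fin.valEmbedding, ← Nat.card_Ioc q d]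
      congr 1
      ext i
      simp only [Finset.mem_map, Finset.mem_filter, Finset.mem_univ, true_and,
        Fin.valEmbedding_apply, Finset.mem_Ioc]
      constructor
      · rintro ⟨a, ha, rfl⟩
        omega
      · intro hi
        exact ⟨⟨i, by omega⟩, by simp only; omega, rfl⟩
    rw [hset, Finset.card_union_of_disjoint, Finset.card_product, Finset.card_singleton, hcol,
      mul_one, Nat.cast_add, Nat.cast_sub (by omega)]
    · push_cast at hrec ⊢
      linarith
    · rw [Finset.disjoint_left]
      intro e he he'
      simp only [Finset.mem_filter, Finset.mem_univ, true_and,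
        Finset.mem_product, Finset.mem_singleton, Fin.ext_iff] at he he'
      omega

/-- second outer bound, Theorem `thm-lm`: for a disjoint cover of the
helper region `Δ = {(i,j) : q+1 ≤ j ≤ k, j < i ≤ d+1}` (server `t` of the paper is
index `t-1`) by rectangles `M_t × L_t`, with `ℓ_t = |L_t| ≥ 1`, `m_t = |M_t| ≥ 1`,
`ℓ_t ≤ r_t`, `r_t + m_t ≤ k`:
`(1 + Σ ℓ_t)·B ≤ B_q + Σ_t (B_{r_t+m_t-1} + (ℓ_t-1)(B_{r_t+m_t-2} - β))`. -/
theorem stmt_8 {Ω : Type*} [Fintype Ω] {n k d : ℕ} {B α β : ℝ} {P : Ω → ℝ}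
    {σM : Type*} {σW : Fin n → Type*} {σS : Fin n → Fin n → Type*}
    {M : Ω → σM} {W : ∀ j, Ω → σW j} {S : ∀ i j, Ω → σS i j}
    (hcode : IsRegenCode n k d B α β P M W S)
    (q : ℕ) (hq : q ≤ k)
    (s : ℕ) (Ms Ls : Fin s → Finset (Fin n)) (r : Fin s → ℕ)
    (hLs : ∀ t, Ls t ⊆ Finset.univ.filter (fun j : Fin n => q ≤ (j : ℕ) ∧ (j : ℕ) < k))
    (hMs : ∀ t, Ms t ⊆ Finset.univ.filter (fun i : Fin n => (i : ℕ) < d + 1))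
    (hsub : ∀ t, Ms t ×ˢ Ls t ⊆
      Finset.univ.filter (fun e : Fin n × Fin n =>
        q ≤ (e.2 : ℕ) ∧ (e.2 : ℕ) < k ∧ (e.2 : ℕ) < (e.1 : ℕ) ∧ (e.1 : ℕ) < d + 1))
    (hdisj : ∀ t t', t ≠ t' → Disjoint (Ms t ×ˢ Ls t) (Ms t' ×ˢ Ls t'))
    (hcover : Finset.univ.biUnion (fun t => Ms t ×ˢ Ls t) =
      Finset.univ.filter (fun e : Fin n × Fin n =>
        q ≤ (e.2 : ℕ) ∧ (e.2 : ℕ) < k ∧ (e.2 : ℕ) < (e.1 : ℕ) ∧ (e.1 : ℕ) < d + 1))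
    (hℓ : ∀ t, 1 ≤ (Ls t).card) (hm : ∀ t, 1 ≤ (Ms t).card)
    (hr : ∀ t, (Ls t).card ≤ r t ∧ r t + (Ms t).card ≤ k) :
    (1 + ∑ t, ((Ls t).card : ℝ)) * B
      ≤ Bfun k d q α β
        + ∑ t, (Bfun k d (r t + (Ms t).card - 1) α β
            + (((Ls t).card - 1 : ℕ) : ℝ) * (Bfun k d (r t + (Ms t).card - 2) α β - β)) := by
  classical
  have hkd := hcode.hkd
  have hdn := hcode.hdn
  have hP := hcode.prob_nonneg
  have hP1 := hcode.prob_sum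
  set Q : Finset (Fin n) := Finset.univ.filter fun j => (j : ℕ) < q with hQ
  have hQcard : Q.card = q := by
    rw [hQ, Fin.card_filter_val_lt]
    omega
  set rect : Fin s → Setoid Ω := fun t =>
    (Ms t ×ˢ Ls t).inf fun e => Setoid.ker (S e.1 e.2)
  have hfile : B ≤ partitionEntropy P
      ((Q.inf fun j => Setoid.ker (W j)) ⊓ Finset.univ.inf rect) := by
    refine hcode.le_partitionEntropy (J := Finset.univ.filter fun j : Fin n => (j : ℕ) < k)
      (by rw [Fin.card_filter_val_lt]; omega) fun j hj => ?_
    refine hcode.determines_of_minimal_configuration (q := q)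
      (r := (Q.inf fun j => Setoid.ker (W j)) ⊓ Finset.univ.inf rect) (fun j hj x y _ _ h =>
        finset_inf_setoid_iff.1 h.1 j (by simpa [hQ] using hj)) ?_ j (by simpa using hj)
    intro i j h1 h2 h3 h4 x y _ _ h
    have hmem : (i, j) ∈ Finset.univ.biUnion (fun t => Ms t ×ˢ Ls t) := by
      rw [hcover]
      simpa using ⟨h1, h2, h3, by omega⟩
    obtain ⟨t, -, ht⟩ := Finset.mem_biUnion.1 hmem
    exact finset_inf_setoid_iff.1 (finset_inf_setoid_iff.1 h.2 t (Finset.mem_univ t)) (i, j) ht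
  have hinf := partitionEntropy_inf_le hP hP1 (Q.inf fun j => Setoid.ker (W j))
    (Finset.univ.inf rect)
  have hnodes := hcode.entropy_nodes_le Q
  rw [hQcard] at hnodes
  have hrects := partitionEntropy_finset_inf_le hP hP1 Finset.univ rect
  have hbound := Finset.sum_le_sum fun t (_ : t ∈ Finset.univ) =>
    hcode.helpers_rectangle_add_le (Ms := Ms t) (Ls := Ls t) (r := r t)
      (fun i hi hi' => by
        have := hsub t (Finset.mk_mem_product hi hi')
        simp at this)
      (hℓ t) (hm t) (hr t).1 (hr t).2
  have hcard := Finset.card_biUnion (s := Finset.univ) fun t _ t' _ h => hdisj t t' h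
  rw [hcover] at hcard
  rw [Finset.sum_add_distrib, Finset.sum_add_distrib, ← Finset.sum_mul, ← Finset.sum_mul,
    ← Nat.cast_sum Finset.univ fun t => (Ms t ×ˢ Ls t).card, ← hcard] at hbound
  have hB := nodes_add_minimal_configuration_eq_Bfun hq hkd hdn α β
  rw [← hB]
  linarith
end

section
/- Every exact-repair regenerating code with parameters (n,k,d) = (n,6,7), n ≥ 8, and secondary parameters (B,α,β) satisfies 4B ≤ 10α + 43β (equivalently, 4B ≤ 2B_2 + 2B_3 − 3β, where B_2 = 2α + 14β and B_3 = 3α + 9β). -/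
open Finset

/-! ### Shannon entropy of finitely-valued random variables -/

open Classical in
/-- The probability of the fibre of `X` through `ω`. -/
noncomputable def fibreMass {Ω S : Type*} [Fintype Ω] (P : Ω → ℝ) (X : Ω → S) (ω : Ω) : ℝ :=
  ∑ ω' with X ω' = X ω, P ω'

section Entropy

variable {Ω : Type*} [Fintype Ω] {P : Ω → ℝ} {S T U V : Type*}

open Classical in
theorem entH_eq_sum (P : Ω → ℝ) (X : Ω → S) :
    entH P X = -∑ ω, P ω * Real.logb 2 (fibreMass P X ω) := by
  unfold entH
  rw [← Finset.sum_neg_distrib,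
    ← Finset.sum_fiberwise_of_maps_to (s := Finset.univ)
      (t := Finset.univ.image X) (g := X) (by simp)]
  refine Finset.sum_congr (by congr) fun s _ => ?_
  rw [Finset.sum_mul, ← Finset.sum_neg_distrib]
  refine Finset.sum_congr (by congr) fun ω hω => ?_
  obtain rfl : X ω = s := by simpa using hω
  simp only [fibreMass]

theorem fibreMass_congr {X : Ω → S} {Y : Ω → T} {ω ω' : Ω}
    (h : ∀ x, X x = X ω ↔ Y x = Y ω') : fibreMass P X ω = fibreMass P Y ω' := by
  unfold fibreMass
  congr 1
  ext x
  simp [h]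

theorem fibreMass_mono (hP : ∀ ω, 0 ≤ P ω) {X : Ω → S} {Y : Ω → T} {ω : Ω}
    (h : ∀ x, Y x = Y ω → X x = X ω) : fibreMass P Y ω ≤ fibreMass P X ω := by
  unfold fibreMass
  refine Finset.sum_le_sum_of_subset_of_nonneg ?_ fun _ _ _ => hP _
  intro x hx
  simpa using h x (by simpa using hx)

theorem le_fibreMass (hP : ∀ ω, 0 ≤ P ω) (X : Ω → S) (ω : Ω) : P ω ≤ fibreMass P X ω := by
  unfold fibreMass
  exact Finset.single_le_sum (f := P) (fun _ _ => hP _) (by simp)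

theorem entH_mul_log (P : Ω → ℝ) (X : Ω → S) :
    entH P X * Real.log 2 = -∑ ω, P ω * Real.log (fibreMass P X ω) := by
  have hlog2 : Real.log 2 ≠ 0 := (Real.log_pos (by norm_num)).ne'
  rw [entH_eq_sum, neg_mul, Finset.sum_mul]
  congr 1
  refine Finset.sum_congr rfl fun ω _ => ?_
  rw [Real.logb, mul_assoc, div_mul_cancel₀ _ hlog2]

theorem entH_congr {X : Ω → S} {Y : Ω → T} (h : ∀ ω ω', X ω = X ω' ↔ Y ω = Y ω') :
    entH P X = entH P Y := by
  simp only [entH_eq_sum]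
  congr 1
  refine Finset.sum_congr rfl fun ω _ => ?_
  rw [fibreMass_congr fun x => h x ω]

theorem entH_mono (hP : ∀ ω, 0 ≤ P ω) {X : Ω → S} {Y : Ω → T}
    (h : ∀ ω ω', Y ω = Y ω' → X ω = X ω') : entH P X ≤ entH P Y := by
  simp only [entH_eq_sum]
  refine neg_le_neg (Finset.sum_le_sum fun ω _ => ?_)
  rcases (hP ω).eq_or_lt with h0 | h0
  · simp [← h0]
  · refine mul_le_mul_of_nonneg_left ?_ h0.le
    exact Real.logb_le_logb_of_le (by norm_num) (h0.trans_le (le_fibreMass hP Y ω))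
      (fibreMass_mono hP fun x => h x ω)

theorem entH_const (hP : ∑ ω, P ω = 1) {X : Ω → S} (h : ∀ ω ω', X ω = X ω') :
    entH P X = 0 := by
  rw [entH_eq_sum]
  have : ∀ ω, fibreMass P X ω = 1 := fun ω => by simp [fibreMass, h _ ω, hP]
  simp [this]

open Classical in
theorem sum_fibreMass_mul_div_le (hP : ∀ ω, 0 ≤ P ω) {X : Ω → S} {Y : Ω → T}
    {J : Ω → U} {Z : Ω → V} (hJ : ∀ ω ω', J ω = J ω' ↔ X ω = X ω' ∧ Y ω = Y ω')
    (hX : ∀ ω ω', X ω = X ω' → Z ω = Z ω') (hY : ∀ ω ω', Y ω = Y ω' → Z ω = Z ω') :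
    ∑ ω, P ω * (fibreMass P X ω * fibreMass P Y ω / (fibreMass P J ω * fibreMass P Z ω))
      ≤ ∑ ω, P ω := by
  have hexp : ∀ ω, P ω * (fibreMass P X ω * fibreMass P Y ω /
      (fibreMass P J ω * fibreMass P Z ω)) =
      ∑ a, ∑ b, if X a = X ω ∧ Y b = Y ω then
        P a * P b * (P ω / (fibreMass P J ω * fibreMass P Z ω)) else 0 := by
    intro ω
    have : fibreMass P X ω * fibreMass P Y ω =
        ∑ a, ∑ b, if X a = X ω ∧ Y b = Y ω then P a * P b else 0 := by
      simp only [fibreMass, Finset.sum_filter, Finset.sum_mul_sum]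
      refine Finset.sum_congr rfl fun a _ => Finset.sum_congr rfl fun b _ => ?_
      by_cases h1 : X a = X ω <;> by_cases h2 : Y b = Y ω <;> simp [h1, h2]
    rw [mul_div_left_comm, this, Finset.sum_mul]
    refine Finset.sum_congr rfl fun a _ => ?_
    rw [Finset.sum_mul]
    refine Finset.sum_congr rfl fun b _ => ?_
    split_ifs <;> simp
  simp only [hexp]
  rw [Finset.sum_comm]
  refine Finset.sum_le_sum fun a _ => ?_
  rw [Finset.sum_comm]
  have hZ0 : ∀ ω, 0 ≤ fibreMass P Z ω := fun ω => (hP ω).trans (le_fibreMass hP Z ω)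
  have hJ0 : ∀ ω, 0 ≤ fibreMass P J ω := fun ω => (hP ω).trans (le_fibreMass hP J ω)
  have hab : ∀ b, (∑ ω, if X a = X ω ∧ Y b = Y ω then
        P a * P b * (P ω / (fibreMass P J ω * fibreMass P Z ω)) else 0) ≤
      if Z b = Z a then P a * P b / fibreMass P Z a else 0 := by
    intro b
    by_cases hne : ∃ ω₀, X a = X ω₀ ∧ Y b = Y ω₀
    · obtain ⟨ω₀, h1, h2⟩ := hne
      have hZa : Z a = Z ω₀ := hX _ _ h1
      rw [if_pos ((hY _ _ h2).trans hZa.symm)]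
      have hiff : ∀ ω, (X a = X ω ∧ Y b = Y ω) ↔ J ω = J ω₀ := by
        intro ω
        rw [hJ, h1, h2]
        exact and_congr eq_comm eq_comm
      have hval : ∀ ω, (if X a = X ω ∧ Y b = Y ω then
          P a * P b * (P ω / (fibreMass P J ω * fibreMass P Z ω)) else 0) =
          (P a * P b / (fibreMass P J ω₀ * fibreMass P Z a)) *
            (if J ω = J ω₀ then P ω else 0) := by
        intro ω
        by_cases hω : J ω = J ω₀
        · rw [if_pos ((hiff ω).2 hω), if_pos hω,
            fibreMass_congr (X := J) (Y := J) (ω := ω) (ω' := ω₀) (by simp [hω]),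
            fibreMass_congr (X := Z) (Y := Z) (ω := ω) (ω' := a)
              (by simp [hZa, hX _ _ ((hJ _ _).1 hω).1])]
          ring
        · rw [if_neg (fun h => hω ((hiff ω).1 h)), if_neg hω, mul_zero]
      simp only [hval]
      rw [← Finset.mul_sum, ← Finset.sum_filter]
      change _ * fibreMass P J ω₀ ≤ _
      rcases (hJ0 ω₀).eq_or_lt with h0 | h0
      · rw [← h0, mul_zero]
        exact div_nonneg (mul_nonneg (hP _) (hP _)) (hZ0 _)
      · refine le_of_eq ?_
        rw [← div_div, div_right_comm, div_mul_cancel₀ _ h0.ne']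
    · push Not at hne
      rw [Finset.sum_eq_zero fun ω _ => if_neg fun h => hne ω h.1 h.2]
      split_ifs
      · exact div_nonneg (mul_nonneg (hP _) (hP _)) (hZ0 _)
      · exact le_rfl
  refine (Finset.sum_le_sum fun b _ => hab b).trans ?_
  rw [← Finset.sum_filter]
  simp only [mul_div_right_comm]
  rw [← Finset.mul_sum]
  change _ * fibreMass P Z a ≤ _
  rcases (hZ0 a).eq_or_lt with h0 | h0
  · rw [← h0, mul_zero]; exact hP a
  · rw [div_mul_cancel₀ _ h0.ne']

/-- Submodularity of entropy: if `J` is the join of `X` and `Y`, and `Z` is a function of each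
of `X` and `Y`, then `H(J) + H(Z) ≤ H(X) + H(Y)`. -/
theorem entH_submodular (hP : ∀ ω, 0 ≤ P ω) {X : Ω → S} {Y : Ω → T}
    {J : Ω → U} {Z : Ω → V} (hJ : ∀ ω ω', J ω = J ω' ↔ X ω = X ω' ∧ Y ω = Y ω')
    (hX : ∀ ω ω', X ω = X ω' → Z ω = Z ω') (hY : ∀ ω ω', Y ω = Y ω' → Z ω = Z ω') :
    entH P J + entH P Z ≤ entH P X + entH P Y := by
  have hlog2 : 0 < Real.log 2 := Real.log_pos (by norm_num)
  have key : ∀ ω, P ω * (1 - fibreMass P X ω * fibreMass P Y ω /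
      (fibreMass P J ω * fibreMass P Z ω)) ≤
      P ω * (Real.log (fibreMass P J ω) + Real.log (fibreMass P Z ω)
        - Real.log (fibreMass P X ω) - Real.log (fibreMass P Y ω)) := by
    intro ω
    rcases (hP ω).eq_or_lt with h0 | h0
    · simp [← h0]
    refine mul_le_mul_of_nonneg_left ?_ h0.le
    have hj := h0.trans_le (le_fibreMass hP J ω)
    have hz := h0.trans_le (le_fibreMass hP Z ω)
    have hx := h0.trans_le (le_fibreMass hP X ω)
    have hy := h0.trans_le (le_fibreMass hP Y ω)
    have := Real.log_le_sub_one_of_pos (div_pos (mul_pos hx hy) (mul_pos hj hz))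
    rw [Real.log_div (mul_pos hx hy).ne' (mul_pos hj hz).ne', Real.log_mul hx.ne' hy.ne',
      Real.log_mul hj.ne' hz.ne'] at this
    linarith
  have hsum := Finset.sum_le_sum fun ω (_ : ω ∈ Finset.univ) => key ω
  have hle := sum_fibreMass_mul_div_le hP hJ hX hY
  simp only [mul_sub, mul_add, mul_one, Finset.sum_sub_distrib, Finset.sum_add_distrib] at hsum
  refine le_of_mul_le_mul_right ?_ hlog2
  rw [add_mul, add_mul]
  have e1 := entH_mul_log P J
  have e2 := entH_mul_log P Z
  have e3 := entH_mul_log P X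
  have e4 := entH_mul_log P Y
  linarith

end Entropy

/-! ### Rank functions of repair systems on eight servers

A pair `(i, j)` with `i ≠ j` stands for the helper information sent from `i` to `j`, and `(i, i)`
stands for the data stored on server `i`. -/

/-- The stored data of the servers in `J`. -/
def stored (J : Finset (Fin 8)) : Finset (Fin 8 × Fin 8) := J.image fun j => (j, j)

/-- The helper information sent to `j`. -/
def helpers (j : Fin 8) : Finset (Fin 8 × Fin 8) := {e | e.2 = j ∧ e.1 ≠ j}

/-- The helper information sent from `i` to the servers in `J`. -/
def sent (i : Fin 8) (J : Finset (Fin 8)) : Finset (Fin 8 × Fin 8) := J.image fun j => (i, j)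

/-- A set of pairs together with everything that it determines in a single step. -/
def derive (A : Finset (Fin 8 × Fin 8)) : Finset (Fin 8 × Fin 8) :=
  {e | e ∈ A ∨ (e.1, e.1) ∈ A ∨ (e.1 = e.2 ∧ helpers e.1 ⊆ A)}

/-- The properties of the joint entropy, as a function of the set of variables, for a code with
eight servers, seven helpers, and a file recoverable from six servers. -/
structure IsRepairRank (B α β : ℝ) (r : Finset (Fin 8 × Fin 8) → ℝ) : Prop where
  empty : r ∅ = 0
  mono : ∀ A C, A ⊆ C → r A ≤ r C
  submod : ∀ A C, r (A ∪ C) + r (A ∩ C) ≤ r A + r C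
  diag : ∀ i, r {(i, i)} = α
  offDiag : ∀ i j, i ≠ j → r {(i, j)} = β
  store : ∀ i j, i ≠ j → r {(i, j), (i, i)} ≤ r {(i, i)}
  repair : ∀ j, r (insert (j, j) (helpers j)) ≤ r (helpers j)
  file : ∀ J : Finset (Fin 8), J.card = 6 → B ≤ r (stored J)

namespace IsRepairRank

variable {B α β : ℝ} {r : Finset (Fin 8 × Fin 8) → ℝ}

theorem insert_le (h : IsRepairRank B α β r) {e : Fin 8 × Fin 8} {A C : Finset (Fin 8 × Fin 8)}
    (hAC : A ⊆ C) (he : r (insert e A) ≤ r A) : r (insert e C) ≤ r C := by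
  have h1 := h.submod (insert e A) C
  have h2 := h.mono A (insert e A ∩ C)
    (Finset.subset_inter (Finset.subset_insert e A) hAC)
  have h3 := h.mono (insert e C) (insert e A ∪ C) (by
    rw [Finset.insert_union]
    exact Finset.insert_subset_insert e Finset.subset_union_right)
  linarith

theorem union_le_of_forall_insert (h : IsRepairRank B α β r) (A C : Finset (Fin 8 × Fin 8))
    (hC : ∀ e ∈ C, r (insert e A) ≤ r A) : r (A ∪ C) ≤ r A := by
  induction C using Finset.induction_on with
  | empty => simp
  | insert e C _ ih =>
    rw [Finset.union_insert]
    have h1 := h.insert_le (C := A ∪ C) Finset.subset_union_left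
      (hC e (Finset.mem_insert_self e C))
    exact h1.trans (ih fun x hx => hC x (Finset.mem_insert_of_mem hx))

theorem derive_le (h : IsRepairRank B α β r) (A : Finset (Fin 8 × Fin 8)) :
    r (derive A) ≤ r A := by
  refine (h.mono _ (A ∪ derive A) Finset.subset_union_right).trans
    (h.union_le_of_forall_insert _ _ fun e he => ?_)
  obtain ⟨i, j⟩ := e
  simp only [derive, Finset.mem_filter, Finset.mem_univ, true_and] at he
  rcases he with he | he | ⟨rfl, he⟩
  · rw [Finset.insert_eq_of_mem he]
  · by_cases hij : i = j
    · subst hij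
      rw [Finset.insert_eq_of_mem he]
    · exact h.insert_le (A := {(i, i)}) (by simpa using he) (h.store i j hij)
  · exact h.insert_le he (h.repair i)

/-- Submodularity modulo the dependencies of the repair system. -/
theorem add_le_add (h : IsRepairRank B α β r) (A C D E : Finset (Fin 8 × Fin 8))
    (hD : D ⊆ derive (derive A ∪ derive C)) (hEA : E ⊆ derive (derive A))
    (hEC : E ⊆ derive (derive C)) : r D + r E ≤ r A + r C := by
  have h1 := h.submod (derive (derive A)) (derive (derive C))
  have h2 := h.mono _ _ (Finset.subset_inter hEA hEC)
  have hsub : ∀ F, F ⊆ derive F := fun F e he => by simp [derive, he]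
  have h3 : r D ≤ r (derive (derive A) ∪ derive (derive C)) :=
    ((h.mono _ _ hD).trans (h.derive_le _)).trans
      (h.mono _ _ (Finset.union_subset_union (hsub _) (hsub _)))
  linarith [h.derive_le A, h.derive_le (derive A), h.derive_le C, h.derive_le (derive C)]

theorem le_add (h : IsRepairRank B α β r) (A C D : Finset (Fin 8 × Fin 8))
    (hD : D ⊆ derive (derive A ∪ derive C)) : r D ≤ r A + r C := by
  have := h.add_le_add A C D ∅ hD (Finset.empty_subset _) (Finset.empty_subset _)
  rwa [h.empty, add_zero] at this

theorem le_card_mul (h : IsRepairRank B α β r) (A : Finset (Fin 8 × Fin 8))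
    (hA : ∀ e ∈ A, e.1 ≠ e.2) : r A ≤ A.card * β := by
  induction A using Finset.induction_on with
  | empty => simp [h.empty]
  | insert e A he ih =>
    have h1 := h.submod {e} A
    have h2 := h.mono _ _ (Finset.empty_subset ({e} ∩ A))
    have h3 := h.offDiag e.1 e.2 (hA e (Finset.mem_insert_self e A))
    have h4 := ih fun x hx => hA x (Finset.mem_insert_of_mem hx)
    rw [h.empty] at h2
    rw [← Finset.insert_eq] at h1
    rw [Finset.card_insert_of_notMem he]
    push_cast
    linarith

theorem iterate_derive_le (h : IsRepairRank B α β r) (k : ℕ) (A : Finset (Fin 8 × Fin 8)) :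
    r (derive^[k] A) ≤ r A := by
  induction k generalizing A with
  | zero => exact le_rfl
  | succ k ih => exact (ih (derive A)).trans (h.derive_le A)

theorem file_le (h : IsRepairRank B α β r) (J : Finset (Fin 8)) (A : Finset (Fin 8 × Fin 8))
    (hJ : J.card = 6) (hA : stored J ⊆ derive^[6] A) : B ≤ r A :=
  (h.file J hJ).trans <| (h.mono _ _ hA).trans <| h.iterate_derive_le 6 A

end IsRepairRank

/-- The action of a permutation of the servers on sets of pairs. -/
def permute (π : Equiv.Perm (Fin 8)) (A : Finset (Fin 8 × Fin 8)) : Finset (Fin 8 × Fin 8) :=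
  A.map (π.prodCongr π).toEmbedding

/-- A repair rank function that does not depend on the labelling of the servers. -/
structure IsSymmRepairRank (B α β : ℝ) (r : Finset (Fin 8 × Fin 8) → ℝ) : Prop extends
    IsRepairRank B α β r where
  symm : ∀ π A, r (permute π A) = r A

namespace IsSymmRepairRank

variable {B α β : ℝ} {r : Finset (Fin 8 × Fin 8) → ℝ}

theorem sent_eq (h : IsSymmRepairRank B α β r) (π : Equiv.Perm (Fin 8)) (i : Fin 8)
    (J : Finset (Fin 8)) {i' : Fin 8} {J' : Finset (Fin 8)}
    (hπ : permute π (sent i J) = sent i' J') : r (sent i' J') = r (sent i J) := by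
  rw [← hπ, h.symm]

/-- The entropy of the information sent by one server to several others is concave in the number
of recipients. -/
theorem sent_concave (h : IsSymmRepairRank B α β r) :
    r (sent 7 {0, 1, 2}) + r (sent 7 {0}) ≤ 2 * r (sent 7 {0, 1}) ∧
    r (sent 7 {0, 1, 2, 3}) + r (sent 7 {0, 1}) ≤ 2 * r (sent 7 {0, 1, 2}) ∧
    r (sent 7 {0, 1, 2, 3, 4}) + r (sent 7 {0, 1, 2}) ≤ 2 * r (sent 7 {0, 1, 2, 3}) := by
  have e2 : r (sent 7 {0, 2}) = r (sent 7 {0, 1}) :=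
    h.sent_eq (Equiv.swap 1 2) _ _ (by decide +kernel)
  have e3 : r (sent 7 {0, 1, 3}) = r (sent 7 {0, 1, 2}) :=
    h.sent_eq (Equiv.swap 2 3) _ _ (by decide +kernel)
  have e4 : r (sent 7 {0, 1, 2, 4}) = r (sent 7 {0, 1, 2, 3}) :=
    h.sent_eq (Equiv.swap 3 4) _ _ (by decide +kernel)
  refine ⟨?_, ?_, ?_⟩
  · linarith [h.add_le_add (sent 7 {0, 1}) (sent 7 {0, 2}) (sent 7 {0, 1, 2}) (sent 7 {0})
      (by decide +kernel) (by decide +kernel) (by decide +kernel)]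
  · linarith [h.add_le_add (sent 7 {0, 1, 2}) (sent 7 {0, 1, 3}) (sent 7 {0, 1, 2, 3})
      (sent 7 {0, 1}) (by decide +kernel) (by decide +kernel) (by decide +kernel)]
  · linarith [h.add_le_add (sent 7 {0, 1, 2, 3}) (sent 7 {0, 1, 2, 4}) (sent 7 {0, 1, 2, 3, 4})
      (sent 7 {0, 1, 2}) (by decide +kernel) (by decide +kernel) (by decide +kernel)]


/-- The helper information exchanged between server `j` and the servers in `J`. -/
def exchange (j : Fin 8) (J : Finset (Fin 8)) : Finset (Fin 8 × Fin 8) :=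
  sent j J ∪ J.image fun i => (i, j)

theorem helpers_two_le (h : IsSymmRepairRank B α β r) :
    r (helpers 0 ∪ helpers 1) + r (exchange 1 {0}) ≤ 14 * β := by
  have h0 := h.le_card_mul (helpers 0) (by decide +kernel)
  have h1 := h.le_card_mul (helpers 1) (by decide +kernel)
  rw [show (helpers 0).card = 7 by decide +kernel] at h0
  rw [show (helpers 1).card = 7 by decide +kernel] at h1
  push_cast at h0 h1
  linarith [h.add_le_add (helpers 0) (helpers 1) (helpers 0 ∪ helpers 1) (exchange 1 {0})
    (by decide +kernel) (by decide +kernel) (by decide +kernel)]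

theorem helpers_three_le (h : IsSymmRepairRank B α β r) :
    r (helpers 0 ∪ helpers 1 ∪ helpers 2) + r (exchange 1 {0}) + r (exchange 2 {0, 1})
      ≤ 21 * β := by
  have h2 := h.le_card_mul (helpers 2) (by decide +kernel)
  rw [show (helpers 2).card = 7 by decide +kernel] at h2
  push_cast at h2
  linarith [h.helpers_two_le, h.add_le_add (helpers 0 ∪ helpers 1) (helpers 2)
    (helpers 0 ∪ helpers 1 ∪ helpers 2) (exchange 2 {0, 1})
    (by decide +kernel) (by decide +kernel) (by decide +kernel)]

theorem helpers_four_le (h : IsSymmRepairRank B α β r) :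
    r (helpers 0 ∪ helpers 1 ∪ helpers 2 ∪ helpers 3) + r (exchange 1 {0})
      + r (exchange 2 {0, 1}) + r (exchange 3 {0, 1, 2}) ≤ 28 * β := by
  have h3 := h.le_card_mul (helpers 3) (by decide +kernel)
  rw [show (helpers 3).card = 7 by decide +kernel] at h3
  push_cast at h3
  linarith [h.helpers_three_le, h.add_le_add (helpers 0 ∪ helpers 1 ∪ helpers 2) (helpers 3)
    (helpers 0 ∪ helpers 1 ∪ helpers 2 ∪ helpers 3) (exchange 3 {0, 1, 2})
    (by decide +kernel) (by decide +kernel) (by decide +kernel)]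

/-- The file is recovered from the stored data of three servers by repairing three more. -/
theorem file_le_stored_three (h : IsSymmRepairRank B α β r) :
    B ≤ r (stored {0, 1, 2}) + 9 * β := by
  have h1 := h.file_le {0, 1, 2, 3, 4, 5}
    (stored {0, 1, 2} ∪ {(4, 3), (5, 3), (6, 3), (7, 3), (5, 4), (6, 4), (7, 4), (6, 5), (7, 5)})
    (by decide +kernel) (by decide +kernel)
  have h2 := h.le_add (stored {0, 1, 2})
    {(4, 3), (5, 3), (6, 3), (7, 3), (5, 4), (6, 4), (7, 4), (6, 5), (7, 5)} _
    (by decide +kernel) |> h1.trans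
  have h3 := h.le_card_mul
    {(4, 3), (5, 3), (6, 3), (7, 3), (5, 4), (6, 4), (7, 4), (6, 5), (7, 5)} (by decide +kernel)
  rw [show Finset.card _ = 9 by decide +kernel] at h3
  push_cast at h3
  linarith

/-- The file is recovered from the stored data of four servers by repairing two more. -/
theorem file_le_stored_four (h : IsSymmRepairRank B α β r) :
    B ≤ r (stored {0, 1, 2, 3}) + 5 * β := by
  have h1 := h.file_le {0, 1, 2, 3, 4, 5}
    (stored {0, 1, 2, 3} ∪ {(5, 4), (6, 4), (7, 4), (6, 5), (7, 5)})
    (by decide +kernel) (by decide +kernel)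
  have h2 := h.le_add (stored {0, 1, 2, 3}) {(5, 4), (6, 4), (7, 4), (6, 5), (7, 5)} _
    (by decide +kernel) |> h1.trans
  have h3 := h.le_card_mul {(5, 4), (6, 4), (7, 4), (6, 5), (7, 5)} (by decide +kernel)
  rw [show Finset.card _ = 5 by decide +kernel] at h3
  push_cast at h3
  linarith

/-- Data stored on `i` can be added to a set containing the information sent from `i` to `J`
at the cost of `α` minus the entropy of that information. -/
theorem add_stored_le (h : IsSymmRepairRank B α β r) (A : Finset (Fin 8 × Fin 8)) (i : Fin 8)
    (J : Finset (Fin 8)) (hA : sent i J ⊆ derive (derive A)) :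
    r (A ∪ stored {i}) + r (sent i J) ≤ r A + α := by
  have hsub : ∀ F, F ⊆ derive F := fun F e he => by simp [derive, he]
  have h1 := h.add_le_add A (stored {i}) (A ∪ stored {i}) (sent i J)
    ((Finset.union_subset_union (hsub _) (hsub _)).trans (hsub _)) hA
    (fun e he => hsub _ (by
      obtain ⟨j, -, rfl⟩ := Finset.mem_image.1 he
      simp [derive, stored]))
  have h2 : r (stored {i}) = α := h.diag i
  linarith

theorem stored_three_le_of_two (h : IsSymmRepairRank B α β r) :
    r (stored {0, 1, 2}) ≤ r (exchange 1 {0}) + 3 * α - 2 * β := by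
  have h0 := h.add_stored_le (exchange 1 {0}) 0 {1} (by decide +kernel)
  have h1 := h.add_stored_le (exchange 1 {0} ∪ stored {0}) 1 {0} (by decide +kernel)
  have h2 := h.add_stored_le (exchange 1 {0} ∪ stored {0} ∪ stored {1}) 2 ∅ (by decide +kernel)
  have h3 := h.mono (stored {0, 1, 2})
    (exchange 1 {0} ∪ stored {0} ∪ stored {1} ∪ stored {2}) (by decide +kernel)
  have e0 : r (sent 0 {1}) = β := h.offDiag 0 1 (by decide)
  have e1 : r (sent 1 {0}) = β := h.offDiag 1 0 (by decide)
  have e2 : r (sent 2 ∅) = 0 := h.empty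
  linarith

theorem stored_three_le_of_three (h : IsSymmRepairRank B α β r) :
    r (stored {0, 1, 2}) ≤ r (exchange 2 {0, 1}) + 3 * α - 2 * β - r (sent 7 {0, 1}) := by
  have h0 := h.add_stored_le (exchange 2 {0, 1}) 0 {2} (by decide +kernel)
  have h1 := h.add_stored_le (exchange 2 {0, 1} ∪ stored {0}) 1 {2} (by decide +kernel)
  have h2 := h.add_stored_le (exchange 2 {0, 1} ∪ stored {0} ∪ stored {1}) 2 {0, 1}
    (by decide +kernel)
  have h3 := h.mono (stored {0, 1, 2})
    (exchange 2 {0, 1} ∪ stored {0} ∪ stored {1} ∪ stored {2}) (by decide +kernel)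
  have e0 : r (sent 0 {2}) = β := h.offDiag 0 2 (by decide)
  have e1 : r (sent 1 {2}) = β := h.offDiag 1 2 (by decide)
  have e2 : r (sent 2 {0, 1}) = r (sent 7 {0, 1}) :=
    h.sent_eq (Equiv.swap 7 2) _ _ (by decide +kernel)
  linarith

theorem stored_four_le (h : IsSymmRepairRank B α β r) :
    r (stored {0, 1, 2, 3}) ≤
      r (exchange 3 {0, 1, 2}) + 4 * α - 3 * β - r (sent 7 {0, 1, 2}) := by
  have h0 := h.add_stored_le (exchange 3 {0, 1, 2}) 0 {3} (by decide +kernel)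
  have h1 := h.add_stored_le (exchange 3 {0, 1, 2} ∪ stored {0}) 1 {3} (by decide +kernel)
  have h2 := h.add_stored_le (exchange 3 {0, 1, 2} ∪ stored {0} ∪ stored {1}) 2 {3}
    (by decide +kernel)
  have h3 := h.add_stored_le (exchange 3 {0, 1, 2} ∪ stored {0} ∪ stored {1} ∪ stored {2}) 3
    {0, 1, 2} (by decide +kernel)
  have h4 := h.mono (stored {0, 1, 2, 3})
    (exchange 3 {0, 1, 2} ∪ stored {0} ∪ stored {1} ∪ stored {2} ∪ stored {3})
    (by decide +kernel)
  have e0 : r (sent 0 {3}) = β := h.offDiag 0 3 (by decide)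
  have e1 : r (sent 1 {3}) = β := h.offDiag 1 3 (by decide)
  have e2 : r (sent 2 {3}) = β := h.offDiag 2 3 (by decide)
  have e3 : r (sent 3 {0, 1, 2}) = r (sent 7 {0, 1, 2}) :=
    h.sent_eq (Equiv.swap 7 3) _ _ (by decide +kernel)
  linarith

/-- Recovery of the file from the helper information sent to three servers. -/
theorem file_le_helpers_three (h : IsSymmRepairRank B α β r) :
    B ≤ r (helpers 0 ∪ helpers 1 ∪ helpers 2) + α + 2 * r (sent 7 {0, 1, 2, 3, 4})
      + r (sent 7 {0, 1, 2, 3}) - 4 * r (sent 7 {0, 1, 2}) := by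
  set Y := helpers 0 ∪ helpers 1 ∪ helpers 2 with hY
  have h3 := h.add_stored_le Y 3 {0, 1, 2} (by rw [hY]; decide +kernel)
  have h5 := h.add_le_add (Y ∪ stored {3}) (sent 5 {0, 1, 2, 4})
    (Y ∪ stored {3} ∪ sent 5 {0, 1, 2, 4}) (sent 5 {0, 1, 2})
    (by rw [hY]; decide +kernel) (by rw [hY]; decide +kernel) (by decide +kernel)
  have h6 := h.add_le_add (Y ∪ stored {3} ∪ sent 5 {0, 1, 2, 4}) (sent 6 {0, 1, 2, 4, 5})
    (Y ∪ stored {3} ∪ sent 5 {0, 1, 2, 4} ∪ sent 6 {0, 1, 2, 4, 5}) (sent 6 {0, 1, 2})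
    (by rw [hY]; decide +kernel) (by rw [hY]; decide +kernel) (by decide +kernel)
  have h7 := h.add_le_add
    (Y ∪ stored {3} ∪ sent 5 {0, 1, 2, 4} ∪ sent 6 {0, 1, 2, 4, 5}) (sent 7 {0, 1, 2, 4, 5})
    (Y ∪ stored {3} ∪ sent 5 {0, 1, 2, 4} ∪ sent 6 {0, 1, 2, 4, 5} ∪ sent 7 {0, 1, 2, 4, 5})
    (sent 7 {0, 1, 2})
    (by rw [hY]; decide +kernel) (by rw [hY]; decide +kernel) (by decide +kernel)
  have hB := h.file_le {0, 1, 2, 3, 4, 5}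
    (Y ∪ stored {3} ∪ sent 5 {0, 1, 2, 4} ∪ sent 6 {0, 1, 2, 4, 5} ∪ sent 7 {0, 1, 2, 4, 5})
    (by decide +kernel) (by rw [hY]; decide +kernel)
  have e3 : r (sent 3 {0, 1, 2}) = r (sent 7 {0, 1, 2}) :=
    h.sent_eq (Equiv.swap 7 3) _ _ (by decide +kernel)
  have e5 : r (sent 5 {0, 1, 2}) = r (sent 7 {0, 1, 2}) :=
    h.sent_eq (Equiv.swap 7 5) _ _ (by decide +kernel)
  have e6 : r (sent 6 {0, 1, 2}) = r (sent 7 {0, 1, 2}) :=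
    h.sent_eq (Equiv.swap 7 6) _ _ (by decide +kernel)
  have e5' : r (sent 5 {0, 1, 2, 4}) = r (sent 7 {0, 1, 2, 3}) :=
    h.sent_eq (Equiv.swap 7 5 * Equiv.swap 3 4) _ _ (by decide +kernel)
  have e6' : r (sent 6 {0, 1, 2, 4, 5}) = r (sent 7 {0, 1, 2, 3, 4}) :=
    h.sent_eq (Equiv.swap 7 6 * Equiv.swap 3 5) _ _ (by decide +kernel)
  have e7' : r (sent 7 {0, 1, 2, 4, 5}) = r (sent 7 {0, 1, 2, 3, 4}) :=
    h.sent_eq (Equiv.swap 3 5) _ _ (by decide +kernel)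
  linarith

/-- Recovery of the file from the helper information sent to four servers. -/
theorem file_le_helpers_four (h : IsSymmRepairRank B α β r) :
    B ≤ r (helpers 0 ∪ helpers 1 ∪ helpers 2 ∪ helpers 3) + α
      + 2 * r (sent 7 {0, 1, 2, 3, 4}) - 3 * r (sent 7 {0, 1, 2, 3}) := by
  set Y := helpers 0 ∪ helpers 1 ∪ helpers 2 ∪ helpers 3 with hY
  have h4 := h.add_stored_le Y 4 {0, 1, 2, 3} (by rw [hY]; decide +kernel)
  have h6 := h.add_le_add (Y ∪ stored {4}) (sent 6 {0, 1, 2, 3, 5})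
    (Y ∪ stored {4} ∪ sent 6 {0, 1, 2, 3, 5}) (sent 6 {0, 1, 2, 3})
    (by rw [hY]; decide +kernel) (by rw [hY]; decide +kernel) (by decide +kernel)
  have h7 := h.add_le_add (Y ∪ stored {4} ∪ sent 6 {0, 1, 2, 3, 5}) (sent 7 {0, 1, 2, 3, 5})
    (Y ∪ stored {4} ∪ sent 6 {0, 1, 2, 3, 5} ∪ sent 7 {0, 1, 2, 3, 5}) (sent 7 {0, 1, 2, 3})
    (by rw [hY]; decide +kernel) (by rw [hY]; decide +kernel) (by decide +kernel)
  have hB := h.file_le {0, 1, 2, 3, 4, 5}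
    (Y ∪ stored {4} ∪ sent 6 {0, 1, 2, 3, 5} ∪ sent 7 {0, 1, 2, 3, 5})
    (by decide +kernel) (by rw [hY]; decide +kernel)
  have e4 : r (sent 4 {0, 1, 2, 3}) = r (sent 7 {0, 1, 2, 3}) :=
    h.sent_eq (Equiv.swap 7 4) _ _ (by decide +kernel)
  have e6 : r (sent 6 {0, 1, 2, 3}) = r (sent 7 {0, 1, 2, 3}) :=
    h.sent_eq (Equiv.swap 7 6) _ _ (by decide +kernel)
  have e6' : r (sent 6 {0, 1, 2, 3, 5}) = r (sent 7 {0, 1, 2, 3, 4}) :=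
    h.sent_eq (Equiv.swap 7 6 * Equiv.swap 4 5) _ _ (by decide +kernel)
  have e7' : r (sent 7 {0, 1, 2, 3, 5}) = r (sent 7 {0, 1, 2, 3, 4}) :=
    h.sent_eq (Equiv.swap 4 5) _ _ (by decide +kernel)
  linarith

/-- A bound slightly stronger than `4B ≤ 10α + 43β`. -/
theorem ten_mul_file_le (h : IsSymmRepairRank B α β r) : 10 * B ≤ 25 * α + 107 * β := by
  obtain ⟨c1, c2, c3⟩ := h.sent_concave
  have h1 : r (sent 7 {0}) = β := h.offDiag 7 0 (by decide)
  linarith [h.helpers_three_le, h.helpers_four_le, h.file_le_stored_three,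
    h.file_le_stored_four, h.stored_three_le_of_two, h.stored_three_le_of_three,
    h.stored_four_le, h.file_le_helpers_three, h.file_le_helpers_four]

end IsSymmRepairRank

/-- Averaging over all labellings of the servers, without the normalizing factor. -/
theorem IsRepairRank.sum_permute {B α β : ℝ} {r : Finset (Fin 8 × Fin 8) → ℝ}
    (h : IsRepairRank B α β r) :
    IsSymmRepairRank (Fintype.card (Equiv.Perm (Fin 8)) * B)
      (Fintype.card (Equiv.Perm (Fin 8)) * α) (Fintype.card (Equiv.Perm (Fin 8)) * β)
      (fun A => ∑ π : Equiv.Perm (Fin 8), r (permute π A)) := by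
  have hcst : ∀ c : ℝ, (Fintype.card (Equiv.Perm (Fin 8)) : ℝ) * c =
      ∑ _π : Equiv.Perm (Fin 8), c := fun c => by simp
  have hhelp : ∀ π j, permute π (helpers j) = helpers (π j) := by
    intro π j
    ext ⟨a, b⟩
    simp only [permute, helpers, Finset.mem_map, Finset.mem_filter, Finset.mem_univ, true_and,
      Equiv.coe_toEmbedding, Equiv.prodCongr_apply, Prod.exists, Prod.map, Prod.mk.injEq]
    constructor
    · rintro ⟨x, y, ⟨rfl, hx⟩, rfl, rfl⟩
      exact ⟨rfl, fun hxy => hx (π.injective hxy)⟩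
    · rintro ⟨rfl, ha⟩
      exact ⟨π.symm a, j, ⟨rfl, fun hj => ha (by simp [← hj])⟩, by simp, rfl⟩
  constructor
  · constructor
    · simp [permute, h.empty]
    · exact fun A C hAC => Finset.sum_le_sum fun π _ => h.mono _ _ (Finset.map_subset_map.2 hAC)
    · intro A C
      rw [← Finset.sum_add_distrib, ← Finset.sum_add_distrib]
      refine Finset.sum_le_sum fun π _ => ?_
      have := h.submod (permute π A) (permute π C)
      rwa [permute, permute, ← Finset.map_union, ← Finset.map_inter] at this
    · intro i
      simp [permute, h.diag]
    · intro i j hij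
      rw [hcst]
      refine Finset.sum_congr rfl fun π _ => ?_
      simpa [permute] using h.offDiag (π i) (π j) (fun he => hij (π.injective he))
    · intro i j hij
      refine Finset.sum_le_sum fun π _ => ?_
      simpa [permute] using h.store (π i) (π j) (fun he => hij (π.injective he))
    · intro j
      refine Finset.sum_le_sum fun π _ => ?_
      have := h.repair (π j)
      rw [← hhelp] at this
      simpa [permute] using this
    · intro J hJ
      rw [hcst]
      refine Finset.sum_le_sum fun π _ => ?_
      have := h.file (J.image π) (by rw [Finset.card_image_of_injective _ π.injective, hJ])
      have hst : permute π (stored J) = stored (J.image π) := by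
        simp only [permute, stored, Finset.map_eq_image, Finset.image_image]
        rfl
      rwa [← hst] at this
  · intro σ A
    refine Fintype.sum_equiv (Equiv.mulRight σ) _ _ fun π => ?_
    change r (permute π (permute σ A)) = r (permute (π * σ) A)
    simp only [permute, Finset.map_map]
    rfl

theorem IsRepairRank.ten_mul_file_le {B α β : ℝ} {r : Finset (Fin 8 × Fin 8) → ℝ}
    (h : IsRepairRank B α β r) : 10 * B ≤ 25 * α + 107 * β := by
  have hpos : (0 : ℝ) < Fintype.card (Equiv.Perm (Fin 8)) := by
    exact_mod_cast Fintype.card_pos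
  refine le_of_mul_le_mul_left ?_ hpos
  linarith [h.sum_permute.ten_mul_file_le]

/-! ### The rank function of a code -/

section Code

variable {Ω : Type*} {n : ℕ} {σW : Fin n → Type*} {σS : Fin n → Fin n → Type*}

/-- The variable attached to a pair of servers, represented by its level sets. -/
def pairVar (W : ∀ j, Ω → σW j) (S : ∀ i j, Ω → σS i j) (i j : Fin n) (ω : Ω) : Set Ω :=
  {ω' | if i = j then W i ω' = W i ω else S i j ω' = S i j ω}

theorem pairVar_self_eq_iff (W : ∀ j, Ω → σW j) (S : ∀ i j, Ω → σS i j) (i : Fin n) (ω ω' : Ω) :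
    pairVar W S i i ω = pairVar W S i i ω' ↔ W i ω = W i ω' := by
  simp only [pairVar, if_true]
  constructor
  · intro h
    have : ω ∈ {x | W i x = W i ω} := rfl
    rwa [h] at this
  · intro h
    rw [h]

theorem pairVar_eq_iff_of_ne (W : ∀ j, Ω → σW j) (S : ∀ i j, Ω → σS i j) {i j : Fin n}
    (hij : i ≠ j) (ω ω' : Ω) :
    pairVar W S i j ω = pairVar W S i j ω' ↔ S i j ω = S i j ω' := by
  simp only [pairVar, if_neg hij]
  constructor
  · intro h
    have : ω ∈ {x | S i j x = S i j ω} := rfl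
    rwa [h] at this
  · intro h
    rw [h]

/-- The joint variable attached to a set of pairs among the first eight servers. -/
def pairVars (hn : 8 ≤ n) (W : ∀ j, Ω → σW j) (S : ∀ i j, Ω → σS i j)
    (A : Finset (Fin 8 × Fin 8)) (ω : Ω) (e : A) : Set Ω :=
  pairVar W S (Fin.castLE hn e.1.1) (Fin.castLE hn e.1.2) ω

theorem pairVars_eq_iff (hn : 8 ≤ n) (W : ∀ j, Ω → σW j) (S : ∀ i j, Ω → σS i j)
    (A : Finset (Fin 8 × Fin 8)) (ω ω' : Ω) :
    pairVars hn W S A ω = pairVars hn W S A ω' ↔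
      ∀ i j, (i, j) ∈ A → pairVar W S (Fin.castLE hn i) (Fin.castLE hn j) ω =
        pairVar W S (Fin.castLE hn i) (Fin.castLE hn j) ω' := by
  simp only [funext_iff, pairVars, Subtype.forall, Prod.forall]

end Code

theorem IsRegenCode.isRepairRank {Ω : Type*} [Fintype Ω] {n : ℕ} {B α β : ℝ} {P : Ω → ℝ}
    {σM : Type*} {σW : Fin n → Type*} {σS : Fin n → Fin n → Type*}
    {M : Ω → σM} {W : ∀ j, Ω → σW j} {S : ∀ i j, Ω → σS i j}
    (hn : 8 ≤ n) (hcode : IsRegenCode n 6 7 B α β P M W S) :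
    IsRepairRank B α β (fun A => entH P (pairVars hn W S A)) := by
  have hP := hcode.prob_nonneg
  have hinj : Function.Injective (Fin.castLE hn) := Fin.castLE_injective hn
  constructor
  · exact entH_const hcode.prob_sum fun ω ω' => by simp [pairVars_eq_iff]
  · intro A C hAC
    refine entH_mono hP fun ω ω' h => ?_
    rw [pairVars_eq_iff] at h ⊢
    exact fun i j hij => h i j (hAC hij)
  · intro A C
    refine entH_submodular hP (fun ω ω' => ?_) (fun ω ω' h => ?_) (fun ω ω' h => ?_)
    · simp only [pairVars_eq_iff, Finset.mem_union, or_imp, forall_and]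
    · rw [pairVars_eq_iff] at h ⊢
      exact fun i j hij => h i j (Finset.mem_inter.1 hij).1
    · rw [pairVars_eq_iff] at h ⊢
      exact fun i j hij => h i j (Finset.mem_inter.1 hij).2
  · intro i
    rw [← hcode.hWα (Fin.castLE hn i)]
    refine entH_congr fun ω ω' => ?_
    simp [pairVars_eq_iff, pairVar_self_eq_iff]
  · intro i j hij
    have hij' := hinj.ne hij
    rw [← hcode.hSβ _ _ hij']
    refine entH_congr fun ω ω' => ?_
    simp [pairVars_eq_iff, pairVar_eq_iff_of_ne _ _ hij']
  · intro i j hij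
    have hij' := hinj.ne hij
    have h := hcode.hSW _ _ hij'
    rw [condH, sub_eq_zero] at h
    refine le_of_eq (Eq.trans ?_ (h.trans ?_)) <;> refine entH_congr fun ω ω' => ?_
    · simp [pairVars_eq_iff, or_imp, forall_and, pairVar_self_eq_iff,
        pairVar_eq_iff_of_ne _ _ hij']
    · simp [pairVars_eq_iff, pairVar_self_eq_iff]
  · intro j
    have h := hcode.hWS (Fin.castLE hn j) ((Finset.univ.erase j).image (Fin.castLE hn))
      (by rw [Finset.card_image_of_injective _ hinj]; simp) (by simp)
    rw [condH, sub_eq_zero] at h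
    have hto : ∀ ω ω', pairVars hn W S (helpers j) ω = pairVars hn W S (helpers j) ω' ↔
        jointSto S ((Finset.univ.erase j).image (Fin.castLE hn)) (Fin.castLE hn j) ω =
        jointSto S ((Finset.univ.erase j).image (Fin.castLE hn)) (Fin.castLE hn j) ω' := by
      intro ω ω'
      rw [pairVars_eq_iff]
      simp only [jointSto, funext_iff, Subtype.forall, Finset.forall_mem_image, Finset.mem_erase,
        Finset.mem_univ, and_true, helpers, Finset.mem_filter, true_and]
      constructor
      · intro H i hi
        exact (pairVar_eq_iff_of_ne W S (hinj.ne hi) ω ω').1 (H i j ⟨rfl, hi⟩)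
      · rintro H i _ ⟨rfl, hi⟩
        exact (pairVar_eq_iff_of_ne W S (hinj.ne hi) ω ω').2 (H hi)
    refine le_of_eq (Eq.trans ?_ (h.trans ?_)) <;> refine entH_congr fun ω ω' => ?_
    · rw [Prod.mk.injEq, ← hto, ← pairVar_self_eq_iff W S]
      simp only [pairVars_eq_iff, Finset.mem_insert, or_imp, forall_and, Prod.mk.injEq]
      simp
    · exact (hto ω ω').symm
  · intro J hJ
    have h := hcode.hMW (J.image (Fin.castLE hn))
      (by rw [Finset.card_image_of_injective _ hinj, hJ])
    rw [condH, sub_eq_zero] at h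
    have h1 : entH P M ≤ entH P fun ω => (M ω, jointW W (J.image (Fin.castLE hn)) ω) :=
      entH_mono hP fun ω ω' h => (Prod.mk.injEq _ _ _ _ ▸ h).1
    rw [hcode.hMB, h] at h1
    refine h1.trans (le_of_eq (entH_congr fun ω ω' => ?_))
    rw [pairVars_eq_iff]
    simp only [jointW, funext_iff, Subtype.forall, stored, Finset.mem_image, Prod.mk.injEq]
    constructor
    · rintro H _ _ ⟨i, hi, rfl, rfl⟩
      exact (pairVar_self_eq_iff W S _ ω ω').2 (H _ ⟨_, hi, rfl⟩)
    · rintro H _ ⟨i, hi, rfl⟩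
      exact (pairVar_self_eq_iff W S _ ω ω').1 (H i i ⟨i, hi, rfl, rfl⟩)

/-- every `(n,6,7)` exact-repair code with `n ≥ 8` satisfies
`4B ≤ 10α + 43β`. -/
theorem stmt_12 {Ω : Type*} [Fintype Ω] {n : ℕ} {B α β : ℝ} {P : Ω → ℝ}
    {σM : Type*} {σW : Fin n → Type*} {σS : Fin n → Fin n → Type*}
    {M : Ω → σM} {W : ∀ j, Ω → σW j} {S : ∀ i j, Ω → σS i j}
    (hn : 8 ≤ n)
    (hcode : IsRegenCode n 6 7 B α β P M W S) :
    4 * B ≤ 10 * α + 43 * β := by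
  linarith [(hcode.isRepairRank hn).ten_mul_file_le, hcode.hβ]
end
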